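/- (Generalized robust disagreement equality for multiple over-confident classes.) Suppose that for every class k ∈ Fin K there is a constant c_k ≥ 0 such that the conditional expectation ν[1{Y = k} | σ(ω ↦ h̃_k(X(ω)))] equals ω ↦ c_k · h̃_k(X(ω)) ν-almost surely. Then ∫_Θ Err(θ) dμ(θ) = Σ_{k ∈ Fin K} c_k · T_k, where T_k = ∫_Ω h̃_k(X(ω)) (1 − h̃_k(X(ω))) dν(ω); consequently, for every constant b and every N ≥ 1, b · ∫_{Θ^{N+1}} PDD_N d(μ^{⊗(N+1)}) − ∫_Θ Err(θ) dμ(θ) = Σ_{k ∈ Fin K} (b − c_k) · T_k. -/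

import Mathlib

open MeasureTheory

/-!
By Fubini, the mean test error is the mean of `1 - h̃_Y(X)`; splitting the test space along the
fibres of `Y` turns it into `∑ₖ ∫_{Y = k} (1 - h̃ₖ(X))`. Under calibration, pulling the
`σ(h̃ₖ(X))`-measurable factor `1 - h̃ₖ(X)` out of the conditional expectation identifies the `k`-th
term with `cₖ Tₖ`.

The disagreement of two independent hypotheses is itself a test error, on the enlarged test space
`Θ × Ω` whose point `(θ', ω)` has input `X ω` and label `h (θ', X ω)`. There the `k`-th term is
`Tₖ`: labels drawn from an independent hypothesis are calibrated with constant `1`.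
-/

section Integration

open ProbabilityTheory

variable {α β : Type*} [MeasurableSpace α] [MeasurableSpace β] {μ : Measure α} {ν : Measure β}
  [SFinite μ] [SFinite ν]

lemma setIntegral_prod_comp_snd {E : Type*} [NormedAddCommGroup E] [NormedSpace ℝ E]
    [CompleteSpace E] {S : Set (α × β)} (hS : MeasurableSet S) {g : β → E}
    (hg : IntegrableOn (fun p => g p.2) S (μ.prod ν)) :
    ∫ p in S, g p.2 ∂(μ.prod ν) = ∫ y, μ.real ((·, y) ⁻¹' S) • g y ∂ν := by
  rw [← integral_indicator hS, integral_prod_symm _ (hg.integrable_indicator hS)]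
  congr with y
  have hsec : MeasurableSet ((·, y) ⁻¹' S) := measurable_prodMk_right hS
  calc ∫ x, S.indicator (fun p => g p.2) (x, y) ∂μ
      = ∫ x, ((·, y) ⁻¹' S).indicator (fun _ => g y) x ∂μ := rfl
    _ = μ.real ((·, y) ⁻¹' S) • g y := integral_indicator_const _ hsec

lemma measureReal_prod_symm {S : Set (α × β)} (hS : MeasurableSet S)
    (hS_fin : (μ.prod ν) S ≠ ⊤) :
    (μ.prod ν).real S = ∫ y, μ.real ((·, y) ⁻¹' S) ∂ν := by
  simpa using setIntegral_prod_comp_snd (g := fun _ => (1 : ℝ)) hS (integrableOn_const hS_fin)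

lemma measureReal_prod {S : Set (α × β)} (hS : MeasurableSet S)
    (hS_fin : (μ.prod ν) S ≠ ⊤) :
    (μ.prod ν).real S = ∫ x, ν.real (Prod.mk x ⁻¹' S) ∂μ := by
  have hS_int : Integrable (S.indicator 1 : α × β → ℝ) (μ.prod ν) :=
    (integrableOn_const hS_fin).integrable_indicator hS
  rw [← integral_indicator_one hS, integral_prod _ hS_int]
  congr with x
  exact integral_indicator_one (measurable_prodMk_left hS)

lemma measurePreserving_eval_prodMk {ι : Type*} [Fintype ι] {E : ι → Type*}
    [∀ i, MeasurableSpace (E i)] (P : ∀ i, Measure (E i)) [∀ i, IsProbabilityMeasure (P i)]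
    {i j : ι} (hij : i ≠ j) :
    MeasurePreserving (fun x : ∀ i, E i => (x i, x j)) (Measure.pi P) ((P i).prod (P j)) where
  measurable := by fun_prop
  map_eq := by rw [← Measure.infinitePi_eq_pi, Measure.infinitePi_map_eval_prod hij]

lemma setIntegral_eq_integral_condExp_mul {Ω : Type*} {m mΩ : MeasurableSpace Ω} {ν : Measure Ω}
    (hm : m ≤ mΩ) [SigmaFinite (ν.trim hm)] {A : Set Ω} (hA : MeasurableSet A) (hA_fin : ν A ≠ ⊤)
    {f : Ω → ℝ} (hf : StronglyMeasurable[m] f) (hfA : IntegrableOn f A ν) :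
    ∫ ω in A, f ω ∂ν = ∫ ω, (ν⟦A | m⟧) ω * f ω ∂ν := by
  have hmul : A.indicator (fun _ => (1 : ℝ)) * f = A.indicator f := by
    ext ω
    by_cases hω : ω ∈ A <;> simp [hω]
  have hfA_int : Integrable (A.indicator (fun _ => (1 : ℝ)) * f) ν :=
    hmul ▸ hfA.integrable_indicator hA
  have hA_int : Integrable (A.indicator fun _ => (1 : ℝ)) ν :=
    (integrableOn_const hA_fin).integrable_indicator hA
  calc ∫ ω in A, f ω ∂ν
      = ∫ ω, (ν[A.indicator (fun _ => (1 : ℝ)) * f | m]) ω ∂ν := by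
        rw [integral_condExp hm, hmul, integral_indicator hA]
    _ = ∫ ω, (ν⟦A | m⟧) ω * f ω ∂ν :=
        integral_congr_ae (condExp_mul_of_stronglyMeasurable_right hf hfA_int hA_int)

end Integration

section Definitions

variable {Θ Ω 𝒳 ι : Type*} [MeasurableSpace Θ] [MeasurableSpace Ω]

/-- The expectation function `h̃_k(x)`: the probability that a random hypothesis assigns the
label `k` to the input `x`. -/
noncomputable def expectationFn (μ : Measure Θ) (h : Θ × 𝒳 → ι) (k : ι) (x : 𝒳) : ℝ :=
  μ.real {θ | h (θ, x) = k}

/-- The test error of the hypothesis `θ` on inputs `X` with labels `Y`. -/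
noncomputable def testError (ν : Measure Ω) (h : Θ × 𝒳 → ι) (X : Ω → 𝒳) (Y : Ω → ι) (θ : Θ) : ℝ :=
  ν.real {ω | h (θ, X ω) ≠ Y ω}

/-- The disagreement of two hypotheses: the test error of `θ` when `θ'` supplies the labels. -/
noncomputable def disagreement (ν : Measure Ω) (h : Θ × 𝒳 → ι) (X : Ω → 𝒳) (θ θ' : Θ) : ℝ :=
  testError ν h X (fun ω => h (θ', X ω)) θ

/-- The quantity `T_k`: the variance `h̃_k(x) (1 - h̃_k(x))` of the indicator that a random
hypothesis predicts `k`, averaged over the test inputs. -/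
noncomputable def meanClassVariance (μ : Measure Θ) (ν : Measure Ω) (h : Θ × 𝒳 → ι) (X : Ω → 𝒳)
    (k : ι) : ℝ :=
  ∫ ω, expectationFn μ h k (X ω) * (1 - expectationFn μ h k (X ω)) ∂ν

/-- The prediction disagreement with dropouts `PDD_N` of the hypothesis `θs 0` with the `N` dropout
samples `θs 1, …, θs N`; it is `0` for `N = 0`, where `1 / N` is a junk value. -/
noncomputable def predictionDisagreement [DecidableEq ι] (ν : Measure Ω) (h : Θ × 𝒳 → ι)
    (X : Ω → 𝒳) (N : ℕ) (θs : Fin (N + 1) → Θ) : ℝ :=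
  ∫ ω, (1 / (N : ℝ)) *
    ∑ i : Fin N, (if h (θs 0, X ω) = h (θs i.succ, X ω) then (0 : ℝ) else 1) ∂ν

end Definitions

section Disagreement

open ProbabilityTheory

variable {Θ Ω 𝒳 ι : Type*} [MeasurableSpace Θ] [MeasurableSpace Ω] [MeasurableSpace 𝒳]
  [MeasurableSpace ι] {μ : Measure Θ} {ν : Measure Ω} {h : Θ × 𝒳 → ι} {X : Ω → 𝒳} {Y : Ω → ι}

lemma measurable_uncurry_expectationFn [SFinite μ] [MeasurableEq ι] (hh : Measurable h) :
    Measurable (Function.uncurry (expectationFn μ h)) := by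
  have hS : MeasurableSet {q : Θ × ι × 𝒳 | h (q.1, q.2.2) = q.2.1} :=
    measurableSet_eq_fun (by fun_prop) (by fun_prop)
  exact (measurable_measure_prodMk_right hS).ennreal_toReal

lemma integrable_one_sub_expectationFn [IsProbabilityMeasure μ] [IsFiniteMeasure ν]
    [MeasurableEq ι] (hh : Measurable h) (hX : Measurable X) (hY : Measurable Y) :
    Integrable (fun ω => 1 - expectationFn μ h (Y ω) (X ω)) ν := by
  have hmeas : Measurable fun ω => expectationFn μ h (Y ω) (X ω) :=
    (measurable_uncurry_expectationFn hh).comp (hY.prodMk hX)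
  refine .of_bound (measurable_const.sub hmeas).aestronglyMeasurable 1 (.of_forall fun ω => ?_)
  have hnonneg : 0 ≤ expectationFn μ h (Y ω) (X ω) := measureReal_nonneg
  have hle_one : expectationFn μ h (Y ω) (X ω) ≤ 1 := measureReal_le_one
  rw [Real.norm_of_nonneg (by linarith)]
  linarith

lemma setIntegral_one_sub_expectationFn_of_condExp_eq [IsProbabilityMeasure μ] [IsFiniteMeasure ν]
    [MeasurableEq ι] (hh : Measurable h) (hX : Measurable X) (hY : Measurable Y) {k : ι} {c : ℝ}
    (hcalib :
      ν⟦Y ⁻¹' {k} | MeasurableSpace.comap (fun ω => expectationFn μ h k (X ω)) inferInstance⟧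
        =ᵐ[ν] fun ω => c * expectationFn μ h k (X ω)) :
    ∫ ω in Y ⁻¹' {k}, (1 - expectationFn μ h k (X ω)) ∂ν = c * meanClassVariance μ ν h X k := by
  set g : Ω → ℝ := fun ω => expectationFn μ h k (X ω)
  have hg : Measurable g :=
    (measurable_uncurry_expectationFn hh).comp (measurable_const.prodMk hX)
  have hg_comap : StronglyMeasurable[MeasurableSpace.comap g inferInstance] fun ω => 1 - g ω :=
    ((comap_measurable g).const_sub 1).stronglyMeasurable
  calc ∫ ω in Y ⁻¹' {k}, (1 - g ω) ∂ν
      = ∫ ω, (ν⟦Y ⁻¹' {k} | MeasurableSpace.comap g inferInstance⟧) ω * (1 - g ω) ∂ν :=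
        setIntegral_eq_integral_condExp_mul hg.comap_le (hY (measurableSet_singleton k))
          (measure_ne_top _ _) hg_comap
          (integrable_one_sub_expectationFn hh hX measurable_const).integrableOn
    _ = ∫ ω, c * (g ω * (1 - g ω)) ∂ν := by
        refine integral_congr_ae ?_
        filter_upwards [hcalib] with ω hω
        rw [hω, mul_assoc]
    _ = c * meanClassVariance μ ν h X k := integral_const_mul _ _

lemma integral_testError [IsProbabilityMeasure μ] [IsFiniteMeasure ν] [MeasurableEq ι]
    (hh : Measurable h) (hX : Measurable X) (hY : Measurable Y) :
    ∫ θ, testError ν h X Y θ ∂μ = ∫ ω, (1 - expectationFn μ h (Y ω) (X ω)) ∂ν := by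
  have hS : MeasurableSet {p : Θ × Ω | h (p.1, X p.2) = Y p.2} :=
    measurableSet_eq_fun (by fun_prop) (by fun_prop)
  calc ∫ θ, testError ν h X Y θ ∂μ
      = (μ.prod ν).real {p : Θ × Ω | h (p.1, X p.2) = Y p.2}ᶜ :=
        (measureReal_prod hS.compl (measure_ne_top _ _)).symm
    _ = ∫ ω, μ.real {θ | h (θ, X ω) = Y ω}ᶜ ∂ν :=
        measureReal_prod_symm hS.compl (measure_ne_top _ _)
    _ = ∫ ω, (1 - expectationFn μ h (Y ω) (X ω)) ∂ν :=
        integral_congr_ae <| .of_forall fun ω =>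
          probReal_compl_eq_one_sub (measurable_prodMk_right hS)

lemma integrable_disagreement [IsFiniteMeasure ν] [MeasurableEq ι] (hh : Measurable h)
    (hX : Measurable X) (ρ : Measure (Θ × Θ)) [IsFiniteMeasure ρ] :
    Integrable (fun p : Θ × Θ => disagreement ν h X p.1 p.2) ρ := by
  have hS : MeasurableSet {q : (Θ × Θ) × Ω | h (q.1.1, X q.2) = h (q.1.2, X q.2)} :=
    measurableSet_eq_fun (by fun_prop) (by fun_prop)
  exact Measure.integrable_measure_prodMk_left hS.compl (measure_ne_top _ _)

lemma predictionDisagreement_eq_mean_disagreement [DecidableEq ι] [IsFiniteMeasure ν]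
    [MeasurableEq ι] (hh : Measurable h) (hX : Measurable X) (N : ℕ) (θs : Fin (N + 1) → Θ) :
    predictionDisagreement ν h X N θs =
      (1 / (N : ℝ)) * ∑ i : Fin N, disagreement ν h X (θs 0) (θs i.succ) := by
  have hS (i : Fin N) : MeasurableSet {ω | h (θs 0, X ω) ≠ h (θs i.succ, X ω)} :=
    (measurableSet_eq_fun (by fun_prop) (by fun_prop)).compl
  have hindicator (i : Fin N) :
      (fun ω => if h (θs 0, X ω) = h (θs i.succ, X ω) then (0 : ℝ) else 1) =
        {ω | h (θs 0, X ω) ≠ h (θs i.succ, X ω)}.indicator 1 := by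
    ext ω
    by_cases hω : h (θs 0, X ω) = h (θs i.succ, X ω) <;> simp [hω]
  have hint (i : Fin N) :
      Integrable (fun ω => if h (θs 0, X ω) = h (θs i.succ, X ω) then (0 : ℝ) else 1) ν := by
    rw [hindicator]
    exact (integrable_const 1).indicator (hS i)
  rw [predictionDisagreement, integral_const_mul, integral_finsetSum _ fun i _ => hint i]
  simp only [hindicator, integral_indicator_one (hS _), disagreement, testError]

lemma integral_predictionDisagreement [DecidableEq ι] [IsProbabilityMeasure μ] [IsFiniteMeasure ν]
    [MeasurableEq ι] (hh : Measurable h) (hX : Measurable X) {N : ℕ} (hN : N ≠ 0) :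
    ∫ θs, predictionDisagreement ν h X N θs ∂(Measure.pi fun _ : Fin (N + 1) => μ) =
      ∫ p : Θ × Θ, disagreement ν h X p.1 p.2 ∂(μ.prod μ) := by
  set D : Θ × Θ → ℝ := fun p => disagreement ν h X p.1 p.2
  have hD : Integrable D (μ.prod μ) := integrable_disagreement hh hX _
  have hpair (i : Fin N) : MeasurePreserving (fun θs : Fin (N + 1) → Θ => (θs 0, θs i.succ))
      (Measure.pi fun _ => μ) (μ.prod μ) :=
    measurePreserving_eval_prodMk _ (Fin.succ_ne_zero i).symm
  have hpair_integrable (i : Fin N) :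
      Integrable (fun θs : Fin (N + 1) → Θ => D (θs 0, θs i.succ)) (Measure.pi fun _ => μ) :=
    (hpair i).integrable_comp_of_integrable hD
  have hpair_integral (i : Fin N) :
      ∫ θs : Fin (N + 1) → Θ, D (θs 0, θs i.succ) ∂(Measure.pi fun _ => μ) =
        ∫ p, D p ∂(μ.prod μ) := by
    rw [← (hpair i).map_eq] at hD ⊢
    exact (integral_map (hpair i).aemeasurable hD.aestronglyMeasurable).symm
  calc ∫ θs, predictionDisagreement ν h X N θs ∂(Measure.pi fun _ : Fin (N + 1) => μ)
      = ∫ θs : Fin (N + 1) → Θ, (1 / (N : ℝ)) * ∑ i : Fin N, D (θs 0, θs i.succ)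
          ∂(Measure.pi fun _ => μ) := by
        simp only [predictionDisagreement_eq_mean_disagreement hh hX, D]
    _ = (1 / (N : ℝ)) * ∑ _i : Fin N, ∫ p, D p ∂(μ.prod μ) := by
        rw [integral_const_mul, integral_finsetSum _ fun i _ => hpair_integrable i]
        simp only [hpair_integral]
    _ = ∫ p, D p ∂(μ.prod μ) := by
        rw [Finset.sum_const, Finset.card_fin, nsmul_eq_mul]
        field_simp

variable [Countable ι] [MeasurableSingletonClass ι]

lemma hasSum_setIntegral_integral_testError [IsProbabilityMeasure μ] [IsFiniteMeasure ν]
    (hh : Measurable h) (hX : Measurable X) (hY : Measurable Y) :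
    HasSum (fun k => ∫ ω in Y ⁻¹' {k}, (1 - expectationFn μ h k (X ω)) ∂ν)
      (∫ θ, testError ν h X Y θ ∂μ) := by
  have hfiber (k : ι) : MeasurableSet (Y ⁻¹' {k}) := hY (measurableSet_singleton k)
  have hcover : ⋃ k, Y ⁻¹' {k} = Set.univ := by
    rw [← Set.preimage_iUnion, Set.iUnion_of_singleton, Set.preimage_univ]
  have hsum := hasSum_integral_iUnion hfiber (pairwise_disjoint_fiber Y)
    (integrable_one_sub_expectationFn (μ := μ) (ν := ν) hh hX hY).integrableOn
  rw [hcover, setIntegral_univ, ← integral_testError hh hX hY] at hsum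
  convert! hsum using 2 with k
  exact setIntegral_congr_fun (hfiber k) fun ω (hω : Y ω = k) => by simp only [hω]

lemma hasSum_meanClassVariance_disagreement [IsProbabilityMeasure μ] [IsFiniteMeasure ν]
    (hh : Measurable h) (hX : Measurable X) :
    HasSum (meanClassVariance μ ν h X)
      (∫ p : Θ × Θ, disagreement ν h X p.1 p.2 ∂(μ.prod μ)) := by
  have hX' : Measurable fun p : Θ × Ω => X p.2 := hX.comp measurable_snd
  have hY' : Measurable fun p : Θ × Ω => h (p.1, X p.2) := by fun_prop
  have hterm (k : ι) : ∫ p in (fun p : Θ × Ω => h (p.1, X p.2)) ⁻¹' {k},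
      (1 - expectationFn μ h k (X p.2)) ∂(μ.prod ν) = meanClassVariance μ ν h X k :=
    setIntegral_prod_comp_snd (g := fun ω => 1 - expectationFn μ h k (X ω))
      (hY' (measurableSet_singleton k))
      (integrable_one_sub_expectationFn hh hX' measurable_const).integrableOn
  have htotal : ∫ p : Θ × Θ, disagreement ν h X p.1 p.2 ∂(μ.prod μ) =
      ∫ θ, testError (μ.prod ν) h (fun p => X p.2) (fun p => h (p.1, X p.2)) θ ∂μ := by
    rw [integral_prod _ (integrable_disagreement hh hX _)]
    congr with θ
    have hS : MeasurableSet {p : Θ × Ω | h (θ, X p.2) = h (p.1, X p.2)} :=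
      measurableSet_eq_fun (by fun_prop) hY'
    exact (measureReal_prod hS.compl (measure_ne_top _ _)).symm
  rw [htotal]
  simpa only [hterm] using
    hasSum_setIntegral_integral_testError (μ := μ) (ν := μ.prod ν) hh hX' hY'

end Disagreement

theorem generalized_robust_disagreement_equality_general
    {Θ Ω 𝒳 ι : Type*} [MeasurableSpace Θ] [MeasurableSpace Ω] [MeasurableSpace 𝒳]
    [MeasurableSpace ι] [MeasurableSingletonClass ι] [Countable ι] [DecidableEq ι]
    (μ : Measure Θ) (ν : Measure Ω)
    [IsProbabilityMeasure μ] [IsFiniteMeasure ν]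
    (h : Θ × 𝒳 → ι) (hmeas : Measurable h)
    (X : Ω → 𝒳) (hX : Measurable X)
    (Y : Ω → ι) (hY : Measurable Y)
    (htilde : ι → 𝒳 → ℝ)
    (htilde_def : ∀ k x, htilde k x = (μ {θ | h (θ, x) = k}).toReal)
    (Err : Θ → ℝ)
    (Err_def : ∀ θ, Err θ = (ν {ω | h (θ, X ω) ≠ Y ω}).toReal)
    (c : ι → ℝ)
    (calib : ∀ k : ι,
      ν[(fun ω => if Y ω = k then (1 : ℝ) else 0) |
          MeasurableSpace.comap (fun ω => htilde k (X ω)) Real.measurableSpace]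
        =ᵐ[ν] fun ω => c k * htilde k (X ω))
    (T : ι → ℝ)
    (T_def : ∀ k, T k = ∫ ω, htilde k (X ω) * (1 - htilde k (X ω)) ∂ν)
    (PDD : (N : ℕ) → (Fin (N + 1) → Θ) → ℝ)
    (PDD_def : ∀ (N : ℕ) (θs : Fin (N + 1) → Θ),
      PDD N θs = ∫ ω, (1 / (N : ℝ)) *
        ∑ i : Fin N, (if h (θs 0, X ω) = h (θs i.succ, X ω) then (0 : ℝ) else 1) ∂ν) :
    HasSum (fun k => c k * T k) (∫ θ, Err θ ∂μ) ∧
      ∀ (b : ℝ) (N : ℕ), 1 ≤ N →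
        HasSum (fun k => (b - c k) * T k)
          (b * (∫ θs, PDD N θs ∂(Measure.pi fun _ : Fin (N + 1) => μ)) - ∫ θ, Err θ ∂μ) := by
  obtain rfl : htilde = expectationFn μ h := funext₂ htilde_def
  obtain rfl : Err = testError ν h X Y := funext Err_def
  obtain rfl : T = meanClassVariance μ ν h X := funext T_def
  obtain rfl : PDD = predictionDisagreement ν h X := funext₂ PDD_def
  have hErr : HasSum (fun k => c k * meanClassVariance μ ν h X k)
      (∫ θ, testError ν h X Y θ ∂μ) := by
    convert! hasSum_setIntegral_integral_testError (μ := μ) (ν := ν) hmeas hX hY using 2 with k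
    have hindicator : (Y ⁻¹' {k}).indicator (fun _ => (1 : ℝ)) =
        fun ω => if Y ω = k then 1 else 0 := by
      ext ω
      by_cases hω : Y ω = k <;> simp [hω]
    exact (setIntegral_one_sub_expectationFn_of_condExp_eq hmeas hX hY
      (hindicator ▸ calib k)).symm
  refine ⟨hErr, fun b N hN => ?_⟩
  rw [integral_predictionDisagreement hmeas hX (Nat.one_le_iff_ne_zero.mp hN)]
  simpa only [sub_mul] using ((hasSum_meanClassVariance_disagreement hmeas hX).mul_left b).sub hErr

/-- Generalized robust disagreement equality for multiple over-confident classes. -/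
theorem generalized_robust_disagreement_equality
    {Θ Ω 𝒳 : Type*} [MeasurableSpace Θ] [MeasurableSpace Ω] [MeasurableSpace 𝒳]
    (μ : Measure Θ) (ν : Measure Ω)
    [IsProbabilityMeasure μ] [IsProbabilityMeasure ν]
    (K : ℕ) (hK : 1 ≤ K)
    (h : Θ × 𝒳 → Fin K) (hmeas : Measurable h)
    (X : Ω → 𝒳) (hX : Measurable X)
    (Y : Ω → Fin K) (hY : Measurable Y)
    (htilde : Fin K → 𝒳 → ℝ)
    (htilde_def : ∀ k x, htilde k x = (μ {θ | h (θ, x) = k}).toReal)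
    (Err : Θ → ℝ)
    (Err_def : ∀ θ, Err θ = (ν {ω | h (θ, X ω) ≠ Y ω}).toReal)
    (c : Fin K → ℝ) (hc : ∀ k, 0 ≤ c k)
    (calib : ∀ k : Fin K,
      ν[(fun ω => if Y ω = k then (1 : ℝ) else 0) |
          MeasurableSpace.comap (fun ω => htilde k (X ω)) Real.measurableSpace]
        =ᵐ[ν] fun ω => c k * htilde k (X ω))
    (T : Fin K → ℝ)
    (T_def : ∀ k, T k = ∫ ω, htilde k (X ω) * (1 - htilde k (X ω)) ∂ν)
    (PDD : (N : ℕ) → (Fin (N + 1) → Θ) → ℝ)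
    (PDD_def : ∀ (N : ℕ) (θs : Fin (N + 1) → Θ),
      PDD N θs = ∫ ω, (1 / (N : ℝ)) *
        ∑ i : Fin N, (if h (θs 0, X ω) = h (θs i.succ, X ω) then (0 : ℝ) else 1) ∂ν) :
    ∫ θ, Err θ ∂μ = ∑ k : Fin K, c k * T k ∧
      ∀ (b : ℝ) (N : ℕ), 1 ≤ N →
        b * (∫ θs, PDD N θs ∂(Measure.pi fun _ : Fin (N + 1) => μ)) -
            ∫ θ, Err θ ∂μ =
          ∑ k : Fin K, (b - c k) * T k := by
  obtain ⟨hErr, hPDD⟩ := generalized_robust_disagreement_equality_general μ ν h hmeas X hX Y hY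
    htilde htilde_def Err Err_def c calib T T_def PDD PDD_def
  exact ⟨hErr.unique (hasSum_fintype _), fun b N hN => (hPDD b N hN).unique (hasSum_fintype _)⟩
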